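/- Let F be a free group of finite rank n, let μ ∈ F, and suppose the quotient F / N⟨μ⟩ of F by the normal closure of μ is a free group of rank n − 1. Then μ is a primitive element of F. -/

import Mathlib

namespace W
open FreeGroup

/-- subgroup generated by a set of letters -/
def FS {X : Type} (A : Set X) : Subgroup (FreeGroup X) := Subgroup.closure (of '' A)

abbrev nc {G : Type} [Group G] (s : Set G) : Subgroup G := Subgroup.normalClosure s

open Classical in
/-- the retraction killing the letters outside A -/
noncomputable def ret {X : Type} (A : Set X) : FreeGroup X →* FreeGroup X :=
  FreeGroup.lift (fun x => if x ∈ A then of x else 1)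

/-- conjugate into a standard subgroup -/
def CI {X : Type} (r : FreeGroup X) (A : Set X) : Prop := ∃ v ∈ FS A, IsConj r v

variable {X : Type}

theorem of_mem_FS {A : Set X} {x : X} (h : x ∈ A) : of x ∈ FS A :=
  Subgroup.subset_closure ⟨x, h, rfl⟩

theorem FS_mono {A B : Set X} (h : A ⊆ B) : FS A ≤ FS B :=
  Subgroup.closure_mono (Set.image_mono h)

/-- homs on FS: if generators land in K so does everything -/
theorem FS_le_comap {G : Type} [Group G] {A : Set X} (f : FreeGroup X →* G) (K : Subgroup G)
    (h : ∀ x ∈ A, f (of x) ∈ K) {w : FreeGroup X} (hw : w ∈ FS A) : f w ∈ K := by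
  have : FS A ≤ K.comap f := by
    rw [FS, Subgroup.closure_le]
    rintro _ ⟨x, hx, rfl⟩
    exact h x hx
  exact this hw

theorem FS_hom_eq {G : Type} [Group G] {A : Set X} (f g : FreeGroup X →* G)
    (h : ∀ x ∈ A, f (of x) = g (of x)) {w : FreeGroup X} (hw : w ∈ FS A) : f w = g w := by
  have : FS A ≤ f.eqLocus g := by
    rw [FS, Subgroup.closure_le]
    rintro _ ⟨x, hx, rfl⟩
    exact h x hx
  exact this hw

theorem FS_univ (w : FreeGroup X) : w ∈ FS (Set.univ : Set X) := by
  have : FS (Set.univ : Set X) = ⊤ := by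
    rw [FS, Set.image_univ, FreeGroup.closure_range_of]
  rw [this]; trivial

theorem ret_mem_inter (A B : Set X) {w : FreeGroup X} (hw : w ∈ FS B) :
    ret A w ∈ FS (A ∩ B) := by
  refine FS_le_comap (ret A) _ (fun x hx => ?_) hw
  by_cases h : x ∈ A
  · simp only [ret, lift_apply_of, h, if_true]; exact of_mem_FS ⟨h, hx⟩
  · simp only [ret, lift_apply_of, h, if_false]; exact one_mem _

theorem ret_mem (A : Set X) (w : FreeGroup X) : ret A w ∈ FS A :=
  FS_mono Set.inter_subset_left (ret_mem_inter A Set.univ (FS_univ w))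

theorem ret_eq {A : Set X} {w : FreeGroup X} (hw : w ∈ FS A) : ret A w = w := by
  refine FS_hom_eq (ret A) (MonoidHom.id _) (fun x hx => ?_) hw
  simp [ret, hx]

theorem CI.mono {r : FreeGroup X} {A B : Set X} (h : CI r A) (hAB : A ⊆ B) : CI r B := by
  obtain ⟨v, hv, hc⟩ := h
  exact ⟨v, FS_mono hAB hv, hc⟩

theorem CI.inter {r : FreeGroup X} {A B : Set X} (hA : CI r A) (hB : CI r B) :
    CI r (A ∩ B) := by
  obtain ⟨a, ha, hra⟩ := hA
  obtain ⟨b, hb, hrb⟩ := hB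
  refine ⟨ret A b, ret_mem_inter A B hb, ?_⟩
  have h1 : IsConj a (ret A b) := by
    have := (ret A).map_isConj (hra.symm.trans hrb)
    rwa [ret_eq ha] at this
  exact hra.trans h1

theorem CI.conj {r s : FreeGroup X} {A : Set X} (h : CI r A) (hrs : IsConj s r) : CI s A := by
  obtain ⟨a, ha, hra⟩ := h
  exact ⟨a, ha, hrs.trans hra⟩

/-- every word lies in the subgroup generated by its letters -/
theorem mk_mem_FS (L : List (X × Bool)) (A : Set X) (h : ∀ p ∈ L, p.1 ∈ A) : mk L ∈ FS A := by
  induction L with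
  | nil => exact one_mem _
  | cons p L ih =>
    have : (mk (p :: L) : FreeGroup X) = mk [p] * mk L := by rw [FreeGroup.mul_mk]; rfl
    rw [this]
    refine mul_mem ?_ (ih fun q hq => h q (List.mem_cons_of_mem _ hq))
    have hp : of p.1 ∈ FS A := of_mem_FS (h p List.mem_cons_self)
    obtain ⟨x, b⟩ := p
    cases b
    · have : (mk [(x, false)] : FreeGroup X) = (of x)⁻¹ := by simp [of, FreeGroup.inv_mk, FreeGroup.invRev]
      rw [this]; exact inv_mem hp
    · exact hp

theorem CI_of_forall (r : FreeGroup X) (A : Set X) (h : ∀ z, z ∉ A → CI r {z}ᶜ) : CI r A := by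
  classical
  obtain ⟨L, rfl⟩ : ∃ L, r = mk L := ⟨_, mk_toWord.symm⟩
  set s : Finset X := (L.map Prod.fst).toFinset with hs
  have key : ∀ t : Finset X, (∀ z ∈ t, z ∉ A) → CI (mk L) ((s : Set X) ∩ (t : Set X)ᶜ) := by
    intro t
    induction t using Finset.induction_on with
    | empty =>
      intro _
      refine ⟨mk L, mk_mem_FS L _ (fun p hp => ?_), IsConj.refl _⟩
      simp only [Finset.coe_empty, Set.compl_empty, Set.inter_univ, hs, Finset.mem_coe,
        List.mem_toFinset]
      exact List.mem_map_of_mem hp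
    | insert a t ha ih =>
      intro ht
      refine ((ih fun z hz => ht z (Finset.mem_insert_of_mem hz)).inter
        (h a (ht a (Finset.mem_insert_self _ _)))).mono ?_
      rintro z ⟨⟨h1, h2⟩, h3⟩
      refine ⟨h1, ?_⟩
      simp only [Finset.coe_insert, Set.mem_compl_iff, Set.mem_insert_iff, not_or]
      exact ⟨h3, h2⟩
  refine (key (s.filter (· ∉ A)) (fun z hz => (Finset.mem_filter.1 hz).2)).mono ?_
  rintro z ⟨h1, h2⟩
  by_contra hz
  exact h2 (Finset.mem_coe.2 (Finset.mem_filter.2 ⟨h1, hz⟩))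

theorem conj_mem_nc {G : Type} [Group G] (s : Set G) {a : G} (ha : a ∈ nc s) (c : G) :
    c * a * c⁻¹ ∈ nc s :=
  (Subgroup.normalClosure_normal (s := s)).conj_mem a ha c

/-- normal closures of conjugate elements -/
theorem nc_conj {G : Type} [Group G] {a b : G} (h : IsConj a b) : nc {a} = nc {b} := by
  have key : ∀ a b : G, IsConj a b → nc {a} ≤ nc {b} := by
    intro a b h
    apply Subgroup.normalClosure_le_normal
    obtain ⟨c, rfl⟩ := isConj_iff.1 h.symm
    intro u hu
    rw [Set.mem_singleton_iff.1 hu]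
    exact conj_mem_nc _ (Subgroup.subset_normalClosure (Set.mem_singleton _)) c
  exact le_antisymm (key _ _ h) (key _ _ h.symm)

theorem amalgam (Z : Bool → Set X) (_hZ : ∀ x, x ∈ Z true ∨ x ∈ Z false)
    (R : Bool → Set (FreeGroup X)) (hR : ∀ b, ∀ w ∈ R b, w ∈ FS (Z b))
    (hL : ∀ b, ∀ w ∈ FS (Z true ∩ Z false), w ∈ nc (R b) → w = 1) (b : Bool)
    (w : FreeGroup X) (hw : w ∈ FS (Z b)) (hn : w ∈ nc (R true ∪ R false)) : w ∈ nc (R b) := by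
  classical
  let G : Bool → Type := fun b => FreeGroup X ⧸ nc (R b)
  let φ : ∀ b, FS (Z true ∩ Z false) →* G b := fun b =>
    (QuotientGroup.mk' (nc (R b))).comp (Subgroup.subtype _)
  have hφ : ∀ b, Function.Injective (φ b) := by
    intro b
    rw [injective_iff_map_eq_one]
    intro a ha
    have h1 : (a : FreeGroup X) ∈ nc (R b) := (QuotientGroup.eq_one_iff _).1 ha
    exact Subtype.ext (hL b a a.2 h1)
  let o : ∀ b, FreeGroup X →* Monoid.PushoutI φ := fun b =>
    (Monoid.PushoutI.of b).comp (QuotientGroup.mk' (nc (R b)))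
  let ψ : FreeGroup X →* Monoid.PushoutI φ :=
    FreeGroup.lift (fun x => if x ∈ Z true then o true (of x) else o false (of x))
  have hψ : ∀ b, ∀ v ∈ FS (Z b), ψ v = o b v := by
    intro b v hv
    refine FS_hom_eq ψ (o b) (fun x hx => ?_) hv
    simp only [ψ, lift_apply_of]
    cases b with
    | true => simp [hx]
    | false =>
      split_ifs with h
      · have e : ∀ b, o b (of x) = Monoid.PushoutI.base φ ⟨of x, of_mem_FS ⟨h, hx⟩⟩ := by
          intro b
          rw [← Monoid.PushoutI.of_apply_eq_base φ b]
          rfl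
        rw [e, e]
      · rfl
  have hker : nc (R true ∪ R false) ≤ ψ.ker := by
    apply Subgroup.normalClosure_le_normal
    have : ∀ b, ∀ v ∈ R b, v ∈ ψ.ker := by
      intro b v hv
      rw [MonoidHom.mem_ker, hψ b v (hR b v hv)]
      have : QuotientGroup.mk' (nc (R b)) v = 1 :=
        (QuotientGroup.eq_one_iff _).2 (Subgroup.subset_normalClosure hv)
      simp only [o, MonoidHom.comp_apply, this, _root_.map_one]
    rintro v (hv | hv)
    · exact this _ v hv
    · exact this _ v hv
  have h1 : o b w = 1 := by rw [← hψ b w hw]; exact hker hn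
  have h2 : QuotientGroup.mk' (nc (R b)) w = 1 := by
    apply Monoid.PushoutI.of_injective hφ b
    rw [_root_.map_one]; exact h1
  exact (QuotientGroup.eq_one_iff _).1 h2

/-- a staggered family of relators -/
structure Stag (x : ℤ → X) (r : ℤ → FreeGroup X) (m M : ℤ) : Prop where
  le : m ≤ M
  inj : Function.Injective x
  mem : ∀ i, r i ∈ FS {z | ∀ j, z = x j → i + m ≤ j ∧ j ≤ i + M}
  top : ∀ i, ∀ w ∈ FS {x (i + M)}ᶜ, w ∈ nc {r i} → w = 1
  bot : ∀ i, ∀ w ∈ FS {x (i + m)}ᶜ, w ∈ nc {r i} → w = 1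

theorem Stag.neg {x : ℤ → X} {r : ℤ → FreeGroup X} {m M : ℤ} (h : Stag x r m M) :
    Stag (fun i => x (-i)) (fun i => r (-i)) (-M) (-m) where
  le := by have := h.le; omega
  inj := fun a b hab => by have := h.inj hab; omega
  mem := fun i => by
    refine FS_mono ?_ (h.mem (-i))
    intro z hz j hj
    have := hz (-j) hj
    omega
  top := fun i w hw => by
    have e : -(i + -m) = -i + m := by omega
    simp only [e] at hw
    exact h.bot (-i) w hw
  bot := fun i w hw => by
    have e : -(i + -M) = -i + M := by omega
    simp only [e] at hw
    exact h.top (-i) w hw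

theorem Stag.up (n : ℕ) : ∀ (x : ℤ → X) (r : ℤ → FreeGroup X) (m M : ℤ), Stag x r m M →
    ∀ S : Finset ℤ, S.card = n → ∀ c ∈ S, (∀ i ∈ S, i ≤ c) →
    ∀ w ∈ FS {z | ∀ j, z = x j → j < c + M}, w ∈ nc (r '' S) → w ∈ nc (r '' (S.erase c)) := by
  induction n using Nat.strong_induction_on with
  | _ n ih =>
  intro x r m M h S hS c hc hmax w hw hn
  -- dropping everything from below
  have down : ∀ k : ℕ, ∀ S' : Finset ℤ, S'.card = k → k < n → (∀ i ∈ S', i < c) →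
      ∀ v ∈ FS {z | ∀ j, z = x j → c + m ≤ j}, v ∈ nc (r '' S') → v = 1 := by
    intro k
    induction k with
    | zero =>
      intro S' hS' _ _ v _ hv
      rw [Finset.card_eq_zero] at hS'
      subst hS'
      simpa using hv
    | succ k ihk =>
      intro S' hS' hk hlt v hv hvn
      have hne : S'.Nonempty := by rw [← Finset.card_pos]; omega
      set d := S'.min' hne with hd
      have hdm : d ∈ S' := S'.min'_mem hne
      have himg : ∀ T : Finset ℤ, (fun i => r (-i)) '' ((T.image (fun i => -i) : Finset ℤ) : Set ℤ)
          = r '' T := by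
        intro T
        ext u
        simp only [Set.mem_image, Finset.coe_image, exists_exists_and_eq_and, neg_neg]
      have := ih (k + 1) hk _ _ _ _ h.neg (S'.image (fun i => -i))
        (by rw [Finset.card_image_of_injective _ neg_injective, hS']) (-d)
        (Finset.mem_image_of_mem _ hdm)
        (by
          intro i hi
          obtain ⟨a, ha, rfl⟩ := Finset.mem_image.1 hi
          have := S'.min'_le a ha
          omega)
        v (FS_mono (by
          intro z hz j hj
          have h1 := hz _ hj
          have := hlt d hdm
          omega) hv) (by rw [himg]; exact hvn)
      have e : (S'.image (fun i => -i)).erase (-d) = (S'.erase d).image (fun i => -i) := by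
        ext u
        simp only [Finset.mem_erase, Finset.mem_image, ne_eq]
        constructor
        · rintro ⟨h1, a, ha, rfl⟩
          exact ⟨a, ⟨fun hh => h1 (by rw [hh]), ha⟩, rfl⟩
        · rintro ⟨a, ⟨h1, ha⟩, rfl⟩
          exact ⟨fun hh => h1 (by omega), a, ha, rfl⟩
      rw [e, himg] at this
      exact ihk (S'.erase d) (by rw [Finset.card_erase_of_mem hdm, hS']; rfl) (by omega)
        (fun i hi => hlt i (Finset.mem_of_mem_erase hi)) v hv this
  have hcard : (S.erase c).card < n := by
    rw [Finset.card_erase_of_mem hc, hS]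
    have : 0 < S.card := Finset.card_pos.2 ⟨c, hc⟩
    omega
  have hlt : ∀ i ∈ S.erase c, i < c := fun i hi =>
    lt_of_le_of_ne (hmax i (Finset.mem_of_mem_erase hi)) (Finset.ne_of_mem_erase hi)
  have := amalgam (X := X)
    (fun b => if b then {z | ∀ j, z = x j → j < c + M} else {z | ∀ j, z = x j → c + m ≤ j})
    (by
      intro z
      by_cases hz : ∃ j, z = x j
      · obtain ⟨j, rfl⟩ := hz
        by_cases hj : j < c + M
        · left
          intro j' hj'
          rw [← h.inj hj']; exact hj
        · right
          intro j' hj'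
          rw [← h.inj hj']
          have := h.le
          omega
      · left
        intro j hj
        exact absurd ⟨j, hj⟩ hz)
    (fun b => if b then r '' (S.erase c) else {r c})
    (by
      intro b v hv
      cases b with
      | true =>
        simp only [if_true] at hv ⊢
        obtain ⟨i, hi, rfl⟩ := hv
        refine FS_mono ?_ (h.mem i)
        intro z hz j hj
        have := hz j hj
        have := hlt i hi
        omega
      | false =>
        simp only [Bool.false_eq_true, if_false] at hv ⊢
        rw [Set.mem_singleton_iff.1 hv]
        refine FS_mono ?_ (h.mem c)
        intro z hz j hj
        exact (hz j hj).1)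
    (by
      intro b v hv hvn
      simp only [Bool.false_eq_true, if_false, if_true] at hv
      cases b with
      | true =>
        exact down _ (S.erase c) rfl hcard hlt v (FS_mono Set.inter_subset_right hv) hvn
      | false =>
        refine h.top c v (FS_mono ?_ hv) hvn
        rintro z ⟨hz, -⟩ (hzc : z = _)
        exact lt_irrefl _ (hz _ hzc))
    true w (by simpa using hw)
    (by
      refine Subgroup.normalClosure_mono ?_ hn
      rintro _ ⟨i, hi, rfl⟩
      by_cases hic : i = c
      · right; simp [hic]
      · left; simp only [if_true]; exact ⟨i, Finset.mem_coe.2 (Finset.mem_erase.2 ⟨hic, hi⟩), rfl⟩)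
  simpa using this

/-- membership in a normal closure of a family uses finitely many members -/
theorem nc_finite {G : Type} [Group G] (r : ℤ → G) (w : G) (hw : w ∈ nc (Set.range r)) :
    ∃ S : Finset ℤ, w ∈ nc (r '' S) := by
  classical
  refine Subgroup.closure_induction (p := fun w _ => ∃ S : Finset ℤ, w ∈ nc (r '' S))
    ?_ ?_ ?_ ?_ hw
  · intro v hv
    obtain ⟨_, ⟨i, rfl⟩, hv⟩ := Group.mem_conjugatesOfSet_iff.1 hv
    refine ⟨{i}, ?_⟩
    obtain ⟨c, rfl⟩ := isConj_iff.1 hv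
    exact conj_mem_nc _ (Subgroup.subset_normalClosure (by simp)) _
  · exact ⟨∅, one_mem _⟩
  · rintro a b _ _ ⟨S, hS⟩ ⟨T, hT⟩
    refine ⟨S ∪ T, mul_mem (Subgroup.normalClosure_mono ?_ hS)
      (Subgroup.normalClosure_mono ?_ hT)⟩
    · apply Set.image_mono; simp
    · apply Set.image_mono; simp
  · rintro a _ ⟨S, hS⟩
    exact ⟨S, inv_mem hS⟩

theorem Stag.single {x : ℤ → X} {r : ℤ → FreeGroup X} {m M : ℤ} (h : Stag x r m M)
    (w : FreeGroup X) (hw : w ∈ FS {z | ∀ j, z = x j → j = 0}) (hn : w ∈ nc (Set.range r)) :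
    ∃ c, w ∈ nc {r c} := by
  classical
  have hex : ∃ k : ℕ, ∃ S : Finset ℤ, S.card = k ∧ w ∈ nc (r '' S) := by
    obtain ⟨S, hS⟩ := nc_finite r w hn
    exact ⟨_, S, rfl, hS⟩
  obtain ⟨S, hS, hwS⟩ := Nat.find_spec hex
  have hmin : ∀ c ∈ S, w ∉ nc (r '' (S.erase c)) := by
    intro c hc hcon
    refine Nat.find_min hex (m := (S.erase c).card) ?_ ⟨_, rfl, hcon⟩
    rw [← hS]
    exact Finset.card_erase_lt_of_mem hc
  rcases S.eq_empty_or_nonempty with rfl | hne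
  · refine ⟨0, ?_⟩
    have : w = 1 := by simpa using hwS
    rw [this]; exact one_mem _
  set c := S.max' hne with hcdef
  set d := S.min' hne with hddef
  have hc : c ∈ S := S.max'_mem hne
  have hd : d ∈ S := S.min'_mem hne
  have h1 : c + M ≤ 0 := by
    by_contra hcon
    refine hmin c hc (Stag.up _ x r m M h S rfl c hc (fun i hi => S.le_max' i hi) w
      (FS_mono ?_ hw) hwS)
    intro z hz j hj
    rw [hz j hj]; omega
  have himg : ∀ T : Finset ℤ, (fun i => r (-i)) '' ((T.image (fun i => -i) : Finset ℤ) : Set ℤ)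
      = r '' T := by
    intro T
    ext u
    simp only [Set.mem_image, Finset.coe_image, exists_exists_and_eq_and, neg_neg]
  have h2 : 0 ≤ d + m := by
    by_contra hcon
    apply hmin d hd
    have := Stag.up _ _ _ _ _ h.neg (S.image (fun i => -i)) rfl (-d)
      (Finset.mem_image_of_mem _ hd)
      (by
        intro i hi
        obtain ⟨a, ha, rfl⟩ := Finset.mem_image.1 hi
        have := S.min'_le a ha
        omega)
      w (FS_mono (by
          intro z hz j hj
          have h1 := hz _ hj
          omega) hw) (by rw [himg]; exact hwS)
    have e : (S.image (fun i => -i)).erase (-d) = (S.erase d).image (fun i => -i) := by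
      ext u
      simp only [Finset.mem_erase, Finset.mem_image, ne_eq]
      constructor
      · rintro ⟨h1, a, ha, rfl⟩
        exact ⟨a, ⟨fun hh => h1 (by rw [hh]), ha⟩, rfl⟩
      · rintro ⟨a, ⟨h1, ha⟩, rfl⟩
        exact ⟨fun hh => h1 (by omega), a, ha, rfl⟩
    rwa [e, himg] at this
  have hle := h.le
  refine ⟨c, Subgroup.normalClosure_mono ?_ hwS⟩
  rintro _ ⟨i, hi, rfl⟩
  have h3 := S.min'_le i hi
  have h4 := S.le_max' i hi
  have : i = c := by omega
  simp [this]

end W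

namespace W
open FreeGroup
variable {X : Type}

/-- shift of the second index -/
def sh (k : ℤ) : FreeGroup (X × ℤ) →* FreeGroup (X × ℤ) :=
  FreeGroup.map (fun p => (p.1, p.2 + k))

@[simp] theorem sh_of (k : ℤ) (p : X × ℤ) : sh k (of p) = of (p.1, p.2 + k) := by
  simp [sh]

theorem sh_sh (k l : ℤ) (w : FreeGroup (X × ℤ)) : sh k (sh l w) = sh (l + k) w := by
  have : (sh k).comp (sh l) = (sh (l + k) : FreeGroup (X × ℤ) →* _) := by
    ext p
    simp [add_assoc]
  exact DFunLike.congr_fun this w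

theorem sh_zero (w : FreeGroup (X × ℤ)) : sh 0 w = w := by
  have : (sh 0) = (MonoidHom.id _ : FreeGroup (X × ℤ) →* _) := by
    ext p
    simp
  exact DFunLike.congr_fun this w

/-- the shift as an automorphism -/
def shE (k : ℤ) : MulAut (FreeGroup (X × ℤ)) where
  toFun := sh k
  invFun := sh (-k)
  left_inv := fun w => by rw [sh_sh, add_neg_cancel, sh_zero]
  right_inv := fun w => by rw [sh_sh, neg_add_cancel, sh_zero]
  map_mul' := fun a b => _root_.map_mul _ a b

/-- the shift action of the integers -/
def act : Multiplicative ℤ →* MulAut (FreeGroup (X × ℤ)) :=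
  MonoidHom.mk' (fun k => shE k.toAdd) (fun a b => by
    ext w
    change sh (a.toAdd + b.toAdd) w = sh a.toAdd (sh b.toAdd w)
    rw [sh_sh, add_comm])

theorem act_apply (k : Multiplicative ℤ) (w : FreeGroup (X × ℤ)) : act k w = sh k.toAdd w := rfl

abbrev SD (X : Type) := FreeGroup (X × ℤ) ⋊[act] Multiplicative ℤ

open Classical in
/-- the rewriting homomorphism -/
noncomputable def Psi (t : X) (e : X → ℤ) : FreeGroup X →* SD X :=
  FreeGroup.lift (fun z => ⟨if z = t then 1 else of (z, 0), Multiplicative.ofAdd (e z)⟩)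

theorem Psi_of (t : X) (e : X → ℤ) {z : X} (h : z ≠ t) :
    Psi t e (of z) = ⟨of (z, 0), Multiplicative.ofAdd (e z)⟩ := by simp [Psi, h]

theorem Psi_t (t : X) (e : X → ℤ) :
    Psi t e (of t) = ⟨1, Multiplicative.ofAdd (e t)⟩ := by simp [Psi]

theorem sh_mk (k : ℤ) (L : List ((X × ℤ) × Bool)) :
    ∃ L' : List ((X × ℤ) × Bool), sh k (mk L) = mk L' ∧ L'.length = L.length :=
  ⟨_, FreeGroup.map.mk, by simp⟩

open Classical in
theorem Psi_len (t : X) (e : X → ℤ) (L : List (X × Bool)) :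
    ∃ L' : List ((X × ℤ) × Bool), (Psi t e (mk L)).left = mk L' ∧
      L'.length ≤ (L.filter (fun p => p.1 ≠ t)).length := by
  induction L with
  | nil => exact ⟨[], by rw [← FreeGroup.one_eq_mk, _root_.map_one]; rfl, le_refl _⟩
  | cons p L ih =>
    obtain ⟨L', hL', hlen⟩ := ih
    have hsplit : (mk (p :: L) : FreeGroup X) = mk [p] * mk L := by rw [FreeGroup.mul_mk]; rfl
    have hp : ∃ L1 : List ((X × ℤ) × Bool), (Psi t e (mk [p])).left = mk L1 ∧
        L1.length ≤ ([p].filter (fun p => p.1 ≠ t)).length := by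
      obtain ⟨z, b⟩ := p
      by_cases hz : z = t
      · subst hz
        refine ⟨[], ?_, by simp⟩
        cases b
        · have : (mk [(z, false)] : FreeGroup X) = (of z)⁻¹ := by
            simp [of, FreeGroup.inv_mk, FreeGroup.invRev]
          rw [this, _root_.map_inv, Psi_t, SemidirectProduct.inv_left]
          change act _ (1 : FreeGroup (X × ℤ))⁻¹ = 1
          rw [inv_one, _root_.map_one]
        · change (Psi z e (of z)).left = _
          rw [Psi_t]; rfl
      · cases b
        · have : (mk [(z, false)] : FreeGroup X) = (of z)⁻¹ := by
            simp [of, FreeGroup.inv_mk, FreeGroup.invRev]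
          rw [this, _root_.map_inv, Psi_of t e hz, SemidirectProduct.inv_left]
          refine ⟨[((z, 0 + (-e z)), false)], ?_, by simp [hz]⟩
          rw [act_apply, _root_.map_inv, sh_of]
          change (of (z, 0 + (-e z)))⁻¹ = _
          simp [of, FreeGroup.inv_mk, FreeGroup.invRev]
        · refine ⟨[((z, 0), true)], ?_, by simp [hz]⟩
          change (Psi t e (of z)).left = _
          rw [Psi_of t e hz]; rfl
    obtain ⟨L1, h1, h1l⟩ := hp
    obtain ⟨L2, h2, h2l⟩ := sh_mk (Psi t e (mk [p])).right.toAdd L'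
    refine ⟨L1 ++ L2, ?_, ?_⟩
    · rw [hsplit, _root_.map_mul, SemidirectProduct.mul_left, h1, act_apply, hL', h2,
        FreeGroup.mul_mk]
    · have : p :: L = [p] ++ L := rfl
      rw [this, List.filter_append, List.length_append, List.length_append]
      omega

theorem Psi_right (t : X) (e : X → ℤ) (w : FreeGroup X) :
    (Psi t e w).right = FreeGroup.lift (fun z => Multiplicative.ofAdd (e z)) w := by
  have : (SemidirectProduct.rightHom).comp (Psi t e)
      = FreeGroup.lift (fun z => Multiplicative.ofAdd (e z)) := by
    ext z
    simp [Psi, SemidirectProduct.rightHom]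
  exact DFunLike.congr_fun this w

/-- the normal closure of all shifts -/
abbrev ncs (r : FreeGroup (X × ℤ)) : Subgroup (FreeGroup (X × ℤ)) :=
  nc (Set.range (fun i : ℤ => sh i r))

theorem sh_mem_ncs (r : FreeGroup (X × ℤ)) (k : ℤ) {v : FreeGroup (X × ℤ)} (hv : v ∈ ncs r) :
    sh k v ∈ ncs r := by
  have hn : ((ncs r).comap (shE k : MulAut (FreeGroup (X × ℤ))).toMonoidHom).Normal :=
    Subgroup.normal_comap _
  have : ncs r ≤ (ncs r).comap (shE k : MulAut (FreeGroup (X × ℤ))).toMonoidHom := by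
    apply Subgroup.normalClosure_le_normal
    rintro _ ⟨i, rfl⟩
    change sh k (sh i r) ∈ ncs r
    rw [sh_sh]
    exact Subgroup.subset_normalClosure ⟨i + k, rfl⟩
  exact this hv

theorem map_inl_normal (r : FreeGroup (X × ℤ)) :
    ((ncs r).map (SemidirectProduct.inl : _ →* SD X)).Normal where
  conj_mem := by
    rintro _ ⟨v, hv, rfl⟩ g
    refine ⟨g.left * sh g.right.toAdd v * g.left⁻¹,
      conj_mem_nc _ (sh_mem_ncs r _ hv) _, ?_⟩
    have e1 : g = SemidirectProduct.inl g.left * SemidirectProduct.inr g.right :=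
      (SemidirectProduct.inl_left_mul_inr_right g).symm
    have e2 := SemidirectProduct.inl_aut (φ := (act : Multiplicative ℤ →* MulAut (FreeGroup (X × ℤ))))
      g.right v
    rw [act_apply] at e2
    rw [_root_.map_mul, _root_.map_mul, e2, _root_.map_inv]
    conv_rhs => rw [e1]
    simp only [mul_inv_rev, mul_assoc, _root_.map_inv]

theorem Psi_nc (t : X) (e : X → ℤ) (r : FreeGroup X) (r' : FreeGroup (X × ℤ))
    (hr : Psi t e r = SemidirectProduct.inl r') (w : FreeGroup X) (hw : w ∈ nc {r}) :
    ∃ w' ∈ ncs r', Psi t e w = SemidirectProduct.inl w' := by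
  have := map_inl_normal r'
  have hle : nc {r} ≤ ((ncs r').map (SemidirectProduct.inl : _ →* SD X)).comap (Psi t e) := by
    apply Subgroup.normalClosure_le_normal
    intro u hu
    rw [Set.mem_singleton_iff.1 hu]
    change Psi t e r ∈ (ncs r').map (SemidirectProduct.inl : _ →* SD X)
    rw [hr]
    exact ⟨r', Subgroup.subset_normalClosure ⟨0, sh_zero r'⟩, rfl⟩
  obtain ⟨w', h1, h2⟩ := hle hw
  exact ⟨w', h1, h2.symm⟩

theorem sh_mem_FS (k : ℤ) (A B : Set (X × ℤ)) (h : ∀ p ∈ A, (p.1, p.2 + k) ∈ B)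
    {v : FreeGroup (X × ℤ)} (hv : v ∈ FS A) : sh k v ∈ FS B :=
  FS_le_comap (sh k) _ (fun p hp => by rw [sh_of]; exact of_mem_FS (h p hp)) hv

theorem Psi_left_mem (t : X) (e : X → ℤ) (A : Set X) (B : Set (X × ℤ))
    (hB : ∀ p ∈ B, ∀ k, (p.1, p.2 + k) ∈ B) (hAB : ∀ z ∈ A, z ≠ t → (z, 0) ∈ B)
    (w : FreeGroup X) (hw : w ∈ FS A) : (Psi t e w).left ∈ FS B := by
  let K : Subgroup (SD X) :=
    { carrier := {g | g.left ∈ FS B}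
      one_mem' := one_mem (FS B)
      mul_mem' := fun {a b} ha hb =>
        mul_mem (S := Subgroup _) ha (sh_mem_FS _ B B (fun p hp => hB p hp _) hb)
      inv_mem' := fun {a} ha => by
        change (a⁻¹).left ∈ FS B
        rw [SemidirectProduct.inv_left]
        exact sh_mem_FS _ B B (fun p hp => hB p hp _) (inv_mem ha) }
  have : Psi t e w ∈ K := by
    refine FS_le_comap (Psi t e) K (fun z hz => ?_) hw
    change (Psi t e (of z)).left ∈ FS B
    by_cases h : z = t
    · subst h; rw [Psi_t]; exact one_mem _
    · rw [Psi_of t e h]; exact of_mem_FS (hAB z hz h)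
  exact this

/-- maps out of the semidirect product -/
noncomputable def back {H : Type} [Group H] (s : H) (b : X → H) : SD X →* H :=
  SemidirectProduct.lift (FreeGroup.lift (fun p => s ^ p.2 * b p.1 * (s ^ p.2)⁻¹))
    (zpowersHom H s) (by
      intro g
      ext p
      simp only [MonoidHom.comp_apply, MulEquiv.coe_toMonoidHom, MulAut.conj_apply,
        act_apply, sh_of, lift_apply_of, zpowersHom_apply]
      rw [zpow_add]
      group)

theorem back_inl_of {H : Type} [Group H] (s : H) (b : X → H) (p : X × ℤ) :
    back s b (SemidirectProduct.inl (of p)) = s ^ p.2 * b p.1 * (s ^ p.2)⁻¹ := by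
  simp [back]

theorem back_inr {H : Type} [Group H] (s : H) (b : X → H) (k : ℤ) :
    back s b (SemidirectProduct.inr (Multiplicative.ofAdd k)) = s ^ k := by
  simp [back]

theorem back_sh {H : Type} [Group H] (s : H) (b : X → H) (k : ℤ) (v : FreeGroup (X × ℤ)) :
    back s b (SemidirectProduct.inl (sh k v)) =
      s ^ k * back s b (SemidirectProduct.inl v) * (s ^ k)⁻¹ := by
  have e2 := SemidirectProduct.inl_aut (φ := (act : Multiplicative ℤ →* MulAut (FreeGroup (X × ℤ))))
      (Multiplicative.ofAdd k) v
  rw [act_apply] at e2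
  change back s b (SemidirectProduct.inl (sh (Multiplicative.ofAdd k).toAdd v)) = _
  rw [e2, _root_.map_mul, _root_.map_mul, _root_.map_inv, _root_.map_inv, back_inr]

/-- adjoining roots of a letter -/
theorem exists_root (t : X) (a : ℤ) (ha : a ≠ 0) : ∃ (H : Type) (_ : Group H)
    (o : FreeGroup X →* H) (s : H), Function.Injective o ∧ s ^ a = o (of t) := by
  let G : Bool → Type := fun b => if b then FreeGroup X else Multiplicative ℤ
  let iG : ∀ b, Group (G b) := fun b => by
    cases b
    · exact (inferInstance : Group (Multiplicative ℤ))
    · exact (inferInstance : Group (FreeGroup X))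
  let φ : ∀ b, Multiplicative ℤ →* G b := fun b => by
    cases b
    · exact (zpowersHom (Multiplicative ℤ) (Multiplicative.ofAdd a))
    · exact (zpowersHom (FreeGroup X) (of t))
  have hφ : ∀ b, Function.Injective (φ b) := by
    intro b
    cases b
    · change Function.Injective (zpowersHom (Multiplicative ℤ) (Multiplicative.ofAdd a))
      intro k l hkl
      have : k.toAdd * a = l.toAdd * a := by
        have h2 := congrArg Multiplicative.toAdd hkl
        rw [zpowersHom_apply, zpowersHom_apply, toAdd_zpow, toAdd_zpow] at h2
        simpa only [smul_eq_mul, toAdd_ofAdd] using h2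
      have := mul_right_cancel₀ ha this
      exact this
    · change Function.Injective (zpowersHom (FreeGroup X) (of t))
      intro k l hkl
      have h2 := congrArg (FreeGroup.lift (fun _ : X => Multiplicative.ofAdd (1 : ℤ))) hkl
      simpa [← ofAdd_zsmul] using h2
  refine ⟨Monoid.PushoutI φ, inferInstance, Monoid.PushoutI.of (φ := φ) true,
    Monoid.PushoutI.of (φ := φ) false (Multiplicative.ofAdd (1 : ℤ) : Multiplicative ℤ),
    Monoid.PushoutI.of_injective hφ true, ?_⟩
  have e1 := Monoid.PushoutI.of_apply_eq_base φ true (Multiplicative.ofAdd 1)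
  have e2 := Monoid.PushoutI.of_apply_eq_base φ false (Multiplicative.ofAdd 1)
  have f1 : φ true (Multiplicative.ofAdd 1) = of t := by
    change zpowersHom (FreeGroup X) (of t) _ = _
    simp
  have f2 : φ false (Multiplicative.ofAdd 1) = (Multiplicative.ofAdd (1:ℤ) : Multiplicative ℤ) ^ a := by
    change zpowersHom (Multiplicative ℤ) (Multiplicative.ofAdd a) _ = _
    simp [← ofAdd_zsmul]
  rw [f1] at e1
  rw [f2] at e2
  refine Eq.trans ?_ (e2.trans e1.symm)
  exact (_root_.map_zpow (Monoid.PushoutI.of (φ := φ) false)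
    (Multiplicative.ofAdd (1 : ℤ) : Multiplicative ℤ) a).symm

theorem Psi_injective (t : X) (e : X → ℤ) (he : e t ≠ 0) : Function.Injective (Psi t e) := by
  obtain ⟨H, _, o, s, ho, hs⟩ := exists_root t (e t) he
  have : (back s (fun z => o (of z) * (s ^ e z)⁻¹)).comp (Psi t e) = o := by
    ext z
    rw [MonoidHom.comp_apply]
    by_cases h : z = t
    · subst h
      rw [Psi_t, SemidirectProduct.mk_eq_inl_mul_inr, _root_.map_mul, back_inr, hs]
      simp
    · rw [Psi_of t e h, SemidirectProduct.mk_eq_inl_mul_inr, _root_.map_mul, back_inr, back_inl_of]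
      simp
  intro a b hab
  apply ho
  rw [← this, MonoidHom.comp_apply, MonoidHom.comp_apply, hab]

end W

namespace W
open FreeGroup
variable {X : Type}

/-- the Freiheitssatz for r -/
def Fr (r : FreeGroup X) : Prop :=
  ∀ x, ¬ CI r {x}ᶜ → ∀ w ∈ FS {x}ᶜ, w ∈ nc {r} → w = 1

theorem CI_sh (k : ℤ) {r : FreeGroup (X × ℤ)} (A B : Set (X × ℤ))
    (h : ∀ p ∈ A, (p.1, p.2 + k) ∈ B) (hc : CI r A) : CI (sh k r) B := by
  obtain ⟨v, hv, hrv⟩ := hc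
  exact ⟨sh k v, sh_mem_FS k A B h hv, (sh k).map_isConj hrv⟩

theorem CI_unsh (k : ℤ) {r : FreeGroup (X × ℤ)} (A B : Set (X × ℤ))
    (h : ∀ p ∈ A, (p.1, p.2 - k) ∈ B) (hc : CI (sh k r) A) : CI r B := by
  have := CI_sh (-k) A B (fun p hp => by simpa [sub_eq_add_neg] using h p hp) hc
  rwa [sh_sh, add_neg_cancel, sh_zero] at this

theorem main_single (r : FreeGroup (X × ℤ)) (y : X) (hFr : ∀ i, Fr (sh i r))
    (hy : ¬ CI r {p | p.1 ≠ y}) (w : FreeGroup (X × ℤ))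
    (hw : w ∈ FS {z : X × ℤ | ∀ j, z = (y, j) → j = 0}) (hn : w ∈ ncs r) :
    ∃ c, w ∈ nc {sh c r} := by
  classical
  set D : Set ℤ := {j | ¬ CI r {(y, j)}ᶜ} with hD
  have hfin : D.Finite := by
    obtain ⟨L, rfl⟩ : ∃ L, r = mk L := ⟨_, mk_toWord.symm⟩
    refine (List.finite_toSet (L.map (fun p => p.1.2))).subset ?_
    intro j hj
    by_contra hcon
    refine hj ⟨_, mk_mem_FS L _ (fun p hp hpj => hcon ?_), IsConj.refl _⟩
    have hpj' : p.1 = (y, j) := hpj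
    exact List.mem_map.2 ⟨p, hp, by rw [hpj']⟩
  have hne : hfin.toFinset.Nonempty := by
    by_contra hcon
    apply hy
    refine CI_of_forall r _ (fun z hz => ?_)
    by_contra hcz
    apply hcon
    refine ⟨z.2, hfin.mem_toFinset.2 ?_⟩
    have : z.1 = y := by simpa using hz
    have hzz : z = (y, z.2) := by rw [← this]
    rw [hzz] at hcz
    exact hcz
  set m := hfin.toFinset.min' hne with hm
  set M := hfin.toFinset.max' hne with hM
  have hmD : m ∈ D := hfin.mem_toFinset.1 (Finset.min'_mem _ _)
  have hMD : M ∈ D := hfin.mem_toFinset.1 (Finset.max'_mem _ _)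
  obtain ⟨r0, hr0, hrr0⟩ : CI r {z : X × ℤ | ∀ j, z = (y, j) → m ≤ j ∧ j ≤ M} := by
    refine CI_of_forall r _ (fun z hz => ?_)
    by_contra hcz
    apply hz
    rintro j rfl
    have hj : j ∈ hfin.toFinset := hfin.mem_toFinset.2 hcz
    exact ⟨Finset.min'_le _ _ hj, Finset.le_max' _ _ hj⟩
  have hnc : ∀ i, nc {sh i r0} = nc {sh i r} := fun i =>
    nc_conj ((sh i).map_isConj hrr0.symm)
  have hcl : ∀ i, ∀ j ∈ D, ¬ CI (sh i r) {(y, i + j)}ᶜ := by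
    intro i j hj hcon
    refine hj (CI_unsh i _ _ ?_ hcon)
    rintro ⟨a, b⟩ hp hp'
    simp only [Set.mem_singleton_iff, Prod.mk.injEq] at hp'
    apply hp
    simp only [Set.mem_singleton_iff, Prod.mk.injEq]
    exact ⟨hp'.1, by omega⟩
  have hst : Stag (fun j => (y, j)) (fun i => sh i r0) m M := by
    refine ⟨?_, ?_, ?_, ?_, ?_⟩
    · exact Finset.min'_le _ _ (Finset.max'_mem _ _)
    · intro a b hab; exact (Prod.mk.inj hab).2
    · intro i
      refine sh_mem_FS i _ _ ?_ hr0
      rintro ⟨a, b⟩ hp j hj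
      simp only [Prod.mk.injEq] at hj
      have := hp b (by rw [hj.1])
      omega
    · intro i v hv hvn
      rw [hnc] at hvn
      exact hFr i (y, i + M) (hcl i M hMD) v hv hvn
    · intro i v hv hvn
      rw [hnc] at hvn
      exact hFr i (y, i + m) (hcl i m hmD) v hv hvn
  obtain ⟨c, hc⟩ := hst.single w hw (by
    have hle : ncs r ≤ ncs r0 := by
      apply Subgroup.normalClosure_le_normal
      rintro _ ⟨i, rfl⟩
      have h1 : nc {sh i r0} ≤ ncs r0 :=
        Subgroup.normalClosure_mono (Set.singleton_subset_iff.2 ⟨i, rfl⟩)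
      apply h1
      rw [hnc]
      exact Subgroup.subset_normalClosure rfl
    exact hle hn)
  rw [hnc] at hc
  exact ⟨c, hc⟩

open Classical in
/-- the exponent sum of a letter -/
noncomputable def expo (x : X) : FreeGroup X →* Multiplicative ℤ :=
  FreeGroup.lift (fun z => Multiplicative.ofAdd (if z = x then 1 else 0))

theorem letter_mem {L : List (X × Bool)} {t : X} (h : ¬ CI (mk L) {t}ᶜ) : ∃ p ∈ L, p.1 = t := by
  by_contra hcon
  push Not at hcon
  exact h ⟨_, mk_mem_FS L _ (fun p hp => hcon p hp), IsConj.refl _⟩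

open Classical in
theorem Psi_short (t : X) (e : X → ℤ) {L : List (X × Bool)} (h : ¬ CI (mk L) {t}ᶜ) :
    ∃ L' : List ((X × ℤ) × Bool), (Psi t e (mk L)).left = mk L' ∧ L'.length < L.length := by
  obtain ⟨L', h1, h2⟩ := Psi_len t e L
  obtain ⟨p, hp, hpt⟩ := letter_mem h
  refine ⟨L', h1, lt_of_le_of_lt h2 ?_⟩
  rw [List.length_filter_lt_length_iff_exists]
  exact ⟨p, hp, by simp [hpt]⟩

open Classical in
/-- the exponent function of the standard rewriting -/
noncomputable def dl (t : X) : X → ℤ := fun z => if z = t then 1 else 0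

theorem back_Psi (t : X) (w : FreeGroup X) : back (of t) of (Psi t (dl t) w) = w := by
  have : (back (of t) of).comp (Psi t (dl t)) = MonoidHom.id _ := by
    ext z
    rw [MonoidHom.comp_apply]
    by_cases h : z = t
    · subst h
      rw [Psi_t, SemidirectProduct.mk_eq_inl_mul_inr, _root_.map_mul, back_inr]
      simp [dl]
    · rw [Psi_of t _ h, SemidirectProduct.mk_eq_inl_mul_inr, _root_.map_mul, back_inr, back_inl_of]
      simp [dl, h]
  exact DFunLike.congr_fun this w

theorem Psi_dl_right (t : X) (w : FreeGroup X) : (Psi t (dl t) w).right = expo t w := by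
  rw [Psi_right]; rfl

theorem eq_inl (g : SD X) (h : g.right = 1) : g = SemidirectProduct.inl g.left := by
  ext
  · rfl
  · exact h

/-- conjugacy information transported by the backwards map -/
theorem CI_back (t : X) (r : FreeGroup X) (r' : FreeGroup (X × ℤ))
    (hr : Psi t (dl t) r = SemidirectProduct.inl r') (A : Set (X × ℤ)) (B : Set X)
    (hAB : ∀ p ∈ A, of t ^ p.2 * of p.1 * (of t ^ p.2)⁻¹ ∈ FS B) (k : ℤ)
    (h : CI (sh k r') A) : CI r B := by
  obtain ⟨v, hv, hc⟩ := h
  refine ⟨back (of t) of (SemidirectProduct.inl v), ?_, ?_⟩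
  · refine FS_le_comap ((back (of t) of).comp SemidirectProduct.inl) _ (fun p hp => ?_) hv
    rw [MonoidHom.comp_apply, back_inl_of]
    exact hAB p hp
  · have h1 := ((back (of t) (of : X → FreeGroup X)).comp SemidirectProduct.inl).map_isConj hc
    rw [MonoidHom.comp_apply, MonoidHom.comp_apply, back_sh, ← hr, back_Psi] at h1
    refine IsConj.trans ?_ h1
    exact isConj_iff.2 ⟨_, rfl⟩

theorem freiheit (n : ℕ) : ∀ (X : Type) (L : List (X × Bool)), L.length = n → Fr (mk L) := by
  classical
  induction n using Nat.strong_induction_on with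
  | _ n ih =>
  intro X L hL x hx w hw hn
  by_cases hA : ∀ t, t ≠ x → CI (mk L) {t}ᶜ
  · obtain ⟨v, hv, hrv⟩ : CI (mk L) {x} := CI_of_forall _ _ (fun z hz => hA z hz)
    rw [nc_conj hrv] at hn
    have hle : nc {v} ≤ (ret ({x}ᶜ : Set X)).ker := by
      apply Subgroup.normalClosure_le_normal
      intro u hu
      rw [Set.mem_singleton_iff.1 hu]
      refine FS_hom_eq (ret ({x}ᶜ : Set X)) 1 (fun z hz => ?_) hv
      rw [Set.mem_singleton_iff.1 hz]
      simp [ret]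
    have := hle hn
    rw [MonoidHom.mem_ker, ret_eq hw] at this
    exact this
  push Not at hA
  obtain ⟨t, htx, ht⟩ := hA
  set α : ℤ := (expo x (mk L)).toAdd with hα
  by_cases hα0 : α = 0
  · -- rewriting with respect to x
    obtain ⟨L', hL', hlen⟩ := Psi_short x (dl x) hx
    have hr := eq_inl (Psi x (dl x) (mk L)) (by
      rw [Psi_dl_right]; exact hα0)
    rw [hL'] at hr
    have hFr : ∀ i, Fr (sh i (mk L')) := by
      intro i
      obtain ⟨L2, h1, h2⟩ := sh_mk i L'
      rw [h1]
      exact ih _ (by omega) _ L2 h2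
    obtain ⟨w', hw', hww'⟩ := Psi_nc x (dl x) (mk L) (mk L') hr w hn
    have hw0 : w' ∈ FS {p : X × ℤ | p.2 = 0} := by
      have : Psi x (dl x) w = SemidirectProduct.inl (FreeGroup.map (fun z => (z, (0 : ℤ))) w) := by
        refine FS_hom_eq (Psi x (dl x))
          (SemidirectProduct.inl.comp (FreeGroup.map (fun z => (z, (0 : ℤ))))) (fun z hz => ?_) hw
        rw [Psi_of x _ hz, MonoidHom.comp_apply, FreeGroup.map.of]
        have : dl x z = 0 := if_neg hz
        rw [this]; rfl
      rw [this] at hww'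
      rw [← SemidirectProduct.inl_injective hww']
      refine FS_le_comap (A := Set.univ) _ _ (fun z _ => ?_) (FS_univ w)
      rw [FreeGroup.map.of]
      exact of_mem_FS rfl
    obtain ⟨c, hc⟩ := main_single (mk L') t hFr (fun hcon => by
      refine ht (CI_back x (mk L) (mk L') hr {p | p.1 ≠ t} _ (fun p hp => ?_) 0
        (by rw [sh_zero]; exact hcon))
      have hxm : of x ∈ FS ({t}ᶜ : Set X) := of_mem_FS (fun h => htx h.symm)
      exact mul_mem (mul_mem (zpow_mem hxm _) (of_mem_FS hp)) (inv_mem (zpow_mem hxm _)))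
      w' (FS_mono (by
        rintro z hz j rfl
        exact hz) hw0) hw'
    have h2 : ∃ z : X × ℤ, z.2 ≠ 0 ∧ ¬ CI (sh c (mk L')) {z}ᶜ := by
      by_contra hcon
      push Not at hcon
      have h3 : CI (sh c (mk L')) {p : X × ℤ | p.2 = 0 ∧ p.1 ≠ x} := by
        have h4 : CI (sh c (mk L')) {p : X × ℤ | p.2 = 0} :=
          CI_of_forall _ _ (fun z hz => hcon z hz)
        have h5 : CI (sh c (mk L')) {p : X × ℤ | p.1 ≠ x} := by
          have := Psi_left_mem x (dl x) Set.univ {p : X × ℤ | p.1 ≠ x} (fun p hp k => hp)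
            (fun z _ hz => hz) (mk L) (FS_univ _)
          rw [hL'] at this
          exact CI_sh c _ _ (fun p hp => hp) ⟨_, this, IsConj.refl _⟩
        exact h4.inter h5
      refine hx (CI_back x (mk L) (mk L') hr _ _ ?_ c h3)
      rintro ⟨a, b⟩ ⟨hb, ha⟩
      simp only at hb ha
      subst hb
      simpa using of_mem_FS (A := ({x}ᶜ : Set X)) ha
    obtain ⟨z, hz, hzc⟩ := h2
    have h1 : w' = 1 := hFr c z hzc w' (FS_mono (by
      intro p hp hpz
      have hpz' : p = z := hpz
      rw [hpz'] at hp
      exact hz hp) hw0) hc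
    rw [h1, _root_.map_one] at hww'
    exact Psi_injective x (dl x) (by simp [dl]) (by rw [hww', _root_.map_one])
  · -- rewriting with respect to t after a substitution
    set β : ℤ := (expo t (mk L)).toAdd with hβ
    set e : X → ℤ := fun z => if z = x then -β else if z = t then α else 0 with he
    have hright : (Psi t e (mk L)).right = 1 := by
      rw [Psi_right]
      have : FreeGroup.lift (fun z => Multiplicative.ofAdd (e z))
          = (expo x) ^ (-β) * (expo t) ^ α := by
        ext z
        simp only [expo, lift_apply_of, MonoidHom.mul_apply, MonoidHom.zpow_apply, he]
        by_cases h1 : z = x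
        · subst h1
          simp [htx.symm, ← ofAdd_zsmul]
        · by_cases h2 : z = t
          · subst h2
            simp [htx, ← ofAdd_zsmul]
          · simp [h1, h2]
      rw [this]
      apply Multiplicative.toAdd.injective
      simp only [MonoidHom.mul_apply, MonoidHom.zpow_apply, toAdd_mul, toAdd_zpow, ← hα, ← hβ]
      simp [mul_comm]
    obtain ⟨L', hL', hlen⟩ := Psi_short t e ht
    have hr := eq_inl _ hright
    rw [hL'] at hr
    have hFr : ∀ i, Fr (sh i (mk L')) := by
      intro i
      obtain ⟨L2, h1, h2⟩ := sh_mk i L'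
      rw [h1]
      exact ih _ (by omega) _ L2 h2
    obtain ⟨w', hw', hww'⟩ := Psi_nc t e (mk L) (mk L') hr w hn
    have hw0 : w' ∈ FS {p : X × ℤ | p.1 ≠ x} := by
      have := Psi_left_mem t e _ {p : X × ℤ | p.1 ≠ x} (fun p hp k => hp) (fun z hz _ => hz) w hw
      rwa [hww'] at this
    -- total exponent of x
    have hq : ∀ k, ¬ CI (sh k (mk L')) {p | p.1 ≠ x} := by
      intro k hcon
      have hcon' : CI (mk L') {p | p.1 ≠ x} := CI_unsh k _ _ (fun p hp => hp) hcon
      obtain ⟨v, hv, hc⟩ := hcon'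
      let q : SD X →* Multiplicative ℤ := back (1 : Multiplicative ℤ)
        (fun z => Multiplicative.ofAdd (if z = x then 1 else 0))
      have hq1 : q.comp (Psi t e) = expo x := by
        ext z
        rw [MonoidHom.comp_apply]
        by_cases h : z = t
        · subst h
          rw [Psi_t, SemidirectProduct.mk_eq_inl_mul_inr, _root_.map_mul, back_inr]
          simp [expo, htx]
        · rw [Psi_of t _ h, SemidirectProduct.mk_eq_inl_mul_inr, _root_.map_mul, back_inr,
            back_inl_of]
          simp [expo]
      have hq2 : q (SemidirectProduct.inl v) = 1 := by
        refine FS_hom_eq (q.comp SemidirectProduct.inl) 1 (fun p hp => ?_) hv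
        rw [MonoidHom.comp_apply, back_inl_of]
        have hp' : p.1 ≠ x := hp
        simp [hp']
      have hq3 := (q.comp SemidirectProduct.inl).map_isConj hc
      rw [isConj_iff_eq, MonoidHom.comp_apply, MonoidHom.comp_apply, hq2, ← hr,
        ← MonoidHom.comp_apply, hq1] at hq3
      apply hα0
      rw [hα, hq3]; rfl
    obtain ⟨c, hc⟩ := main_single (mk L') x hFr
      (fun hcon => hq 0 (by rw [sh_zero]; exact hcon)) w' (FS_mono (by
        rintro z hz j rfl
        exact absurd rfl hz) hw0) hw'
    have h2 : ∃ z : X × ℤ, z.1 = x ∧ ¬ CI (sh c (mk L')) {z}ᶜ := by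
      by_contra hcon
      push Not at hcon
      exact hq c (CI_of_forall _ _ (fun z hz => hcon z (by simpa using hz)))
    obtain ⟨z, hz, hzc⟩ := h2
    have h1 : w' = 1 := hFr c z hzc w' (FS_mono (by
      intro p hp hpz
      have hpz' : p = z := hpz
      rw [hpz'] at hp
      exact hp hz) hw0) hc
    rw [h1, _root_.map_one] at hww'
    exact Psi_injective t e (by simp [he, htx, hα0]) (by rw [hww', _root_.map_one])

theorem Fr_all (r : FreeGroup X) : Fr r := by
  classical
  have := freiheit _ X r.toWord rfl
  rwa [mk_toWord] at this

theorem conj_letter (n : ℕ) : ∀ (X : Type) (L : List (X × Bool)) (x : X), L.length = n →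
    of x ∈ nc {(mk L : FreeGroup X)} → IsConj (mk L) (of x) ∨ IsConj (mk L) (of x)⁻¹ := by
  classical
  induction n using Nat.strong_induction_on with
  | _ n ih =>
  intro X L x hL hxn
  have hx : ¬ CI (mk L) {x}ᶜ := by
    rintro ⟨v, hv, hc⟩
    rw [nc_conj hc] at hxn
    have hle : nc {v} ≤ (expo x).ker := by
      apply Subgroup.normalClosure_le_normal
      intro u hu
      rw [Set.mem_singleton_iff.1 hu]
      refine FS_hom_eq (expo x) 1 (fun z hz => ?_) hv
      have hz' : z ≠ x := hz
      simp [expo, hz']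
    have := hle hxn
    rw [MonoidHom.mem_ker] at this
    simp [expo] at this
  by_cases hA : ∀ t, t ≠ x → CI (mk L) {t}ᶜ
  · obtain ⟨v, hv, hrv⟩ : CI (mk L) {x} := CI_of_forall _ _ (fun z hz => hA z hz)
    rw [nc_conj hrv] at hxn
    rw [FS, Set.image_singleton, Subgroup.mem_closure_singleton] at hv
    obtain ⟨k, rfl⟩ := hv
    have hle : nc {of x ^ k} ≤ (Subgroup.zpowers (Multiplicative.ofAdd k)).comap (expo x) := by
      apply Subgroup.normalClosure_le_normal
      intro u hu
      rw [Set.mem_singleton_iff.1 hu]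
      change expo x (of x ^ k) ∈ Subgroup.zpowers (Multiplicative.ofAdd k)
      have : expo x (of x ^ k) = Multiplicative.ofAdd k := by simp [expo, ← ofAdd_zsmul]
      rw [this]
      exact Subgroup.mem_zpowers _
    obtain ⟨l, hl⟩ := Subgroup.mem_zpowers_iff.1 (hle hxn)
    have hl' : l * k = 1 := by
      have h2 := congrArg Multiplicative.toAdd hl
      simpa [expo] using h2
    rcases Int.eq_one_or_neg_one_of_mul_eq_one' hl' with ⟨-, hk⟩ | ⟨-, hk⟩
    · left; rw [hk, zpow_one] at hrv; exact hrv
    · right; rw [hk, zpow_neg_one] at hrv; exact hrv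
  push Not at hA
  obtain ⟨t, htx, ht⟩ := hA
  have hret : ret ({x}ᶜ : Set X) (mk L) = 1 := by
    refine Fr_all (mk L) x hx _ (ret_mem _ _) ?_
    let π := QuotientGroup.mk' (nc {(mk L : FreeGroup X)})
    have h1 : π.comp (ret ({x}ᶜ : Set X)) = π := by
      ext z
      rw [MonoidHom.comp_apply]
      by_cases hz : z = x
      · subst hz
        have : π (of z) = 1 := (QuotientGroup.eq_one_iff _).2 hxn
        rw [this]
        simp [ret]
      · simp [ret, hz]
    have h2 : π (ret ({x}ᶜ : Set X) (mk L)) = π (mk L) := DFunLike.congr_fun h1 _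
    have h3 : π (mk L) = 1 :=
      (QuotientGroup.eq_one_iff _).2 (Subgroup.subset_normalClosure rfl)
    exact (QuotientGroup.eq_one_iff _).1 (h2.trans h3)
  have hexp : expo t (mk L) = 1 := by
    have : (expo t).comp (ret ({x}ᶜ : Set X)) = expo t := by
      ext z
      rw [MonoidHom.comp_apply]
      by_cases hz : z = x
      · subst hz
        simp [ret, expo, htx.symm]
      · simp [ret, hz]
    rw [← this, MonoidHom.comp_apply, hret, _root_.map_one]
  obtain ⟨L', hL', hlen⟩ := Psi_short t (dl t) ht
  have hr := eq_inl (Psi t (dl t) (mk L)) (by rw [Psi_dl_right]; exact hexp)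
  rw [hL'] at hr
  obtain ⟨w', hw', hww'⟩ := Psi_nc t (dl t) (mk L) (mk L') hr (of x) hxn
  have hx0 : w' = of (x, 0) := by
    rw [Psi_of t _ htx.symm] at hww'
    exact (congrArg SemidirectProduct.left hww').symm
  subst hx0
  obtain ⟨c, hc⟩ := main_single (mk L') x (fun i => Fr_all _) (fun hcon => by
      refine hx (CI_back t (mk L) (mk L') hr {p | p.1 ≠ x} _ (fun p hp => ?_) 0
        (by rw [sh_zero]; exact hcon))
      have hxm : of t ∈ FS ({x}ᶜ : Set X) := of_mem_FS htx
      exact mul_mem (mul_mem (zpow_mem hxm _) (of_mem_FS hp)) (inv_mem (zpow_mem hxm _)))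
      (of (x, 0)) (of_mem_FS (by
        intro j hj
        exact (Prod.mk.inj hj).2.symm)) hw'
  obtain ⟨L2, h1, h2⟩ := sh_mk c L'
  have hfin := ih L2.length (by omega) _ L2 (x, 0) rfl (by rw [← h1]; exact hc)
  rw [← h1] at hfin
  have hb : ∀ v, IsConj (sh c (mk L')) v →
      IsConj (mk L) (back (of t) of (SemidirectProduct.inl v)) := by
    intro v hv
    have h1 := ((back (of t) (of : X → FreeGroup X)).comp SemidirectProduct.inl).map_isConj hv
    rw [MonoidHom.comp_apply, MonoidHom.comp_apply, back_sh, ← hr, back_Psi] at h1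
    exact IsConj.trans (isConj_iff.2 ⟨_, rfl⟩) h1
  rcases hfin with h | h
  · left
    have := hb _ h
    rw [back_inl_of] at this
    simpa using this
  · right
    have := hb _ h
    rw [_root_.map_inv, _root_.map_inv, back_inl_of] at this
    simpa using this

theorem conj_letter' (μ : FreeGroup X) (x : X) (h : of x ∈ nc {μ}) :
    IsConj μ (of x) ∨ IsConj μ (of x)⁻¹ := by
  classical
  have := conj_letter _ X μ.toWord x rfl (by rw [mk_toWord]; exact h)
  rwa [mk_toWord] at this

end W

namespace W
open FreeGroup

section nielsen
variable {m n : ℕ}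

/-- elementary basis change -/
def nielHom (i : Fin n) (ε δ : Fin n → ℤ) : FreeGroup (Fin n) →* FreeGroup (Fin n) :=
  FreeGroup.lift (fun j => (of i) ^ (ε j) * of j * (of i) ^ (δ j))

theorem nielHom_of (i : Fin n) (ε δ : Fin n → ℤ) (j : Fin n) :
    nielHom i ε δ (of j) = (of i) ^ (ε j) * of j * (of i) ^ (δ j) := by
  simp [nielHom]

theorem nielHom_comp (i : Fin n) (ε δ : Fin n → ℤ) (h1 : ε i = 0) (h2 : δ i = 0) :
    (nielHom i ε δ).comp (nielHom i (-ε) (-δ)) = MonoidHom.id _ := by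
  ext j
  have : nielHom i ε δ (of i) = of i := by simp [nielHom_of, h1, h2]
  simp only [MonoidHom.comp_apply, nielHom_of, _root_.map_mul, _root_.map_zpow, this,
    MonoidHom.id_apply, Pi.neg_apply]
  group

def niel (i : Fin n) (ε δ : Fin n → ℤ) (h1 : ε i = 0) (h2 : δ i = 0) :
    FreeGroup (Fin n) ≃* FreeGroup (Fin n) :=
  MonoidHom.toMulEquiv (nielHom i ε δ) (nielHom i (-ε) (-δ))
    (by simpa using nielHom_comp i (-ε) (-δ) (by simp [h1]) (by simp [h2]))
    (nielHom_comp i ε δ h1 h2)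

theorem niel_of (i : Fin n) (ε δ : Fin n → ℤ) (h1 : ε i = 0) (h2 : δ i = 0) (j : Fin n) :
    niel i ε δ h1 h2 (of j) = (of i) ^ (ε j) * of j * (of i) ^ (δ j) :=
  nielHom_of i ε δ j

/-- closed under initial segments -/
def PC (T : Finset (FreeGroup (Fin m))) : Prop :=
  ∀ t ∈ T, ∀ L, L <+: t.toWord → FreeGroup.mk L ∈ T

/-- representation of an element by an edge joining two vertices of T -/
def Rep (T : Finset (FreeGroup (Fin m))) (g : FreeGroup (Fin m)) : Prop :=
  ∃ σ : ℤ, (σ = 1 ∨ σ = -1) ∧ ∃ u ∈ T, ∃ v ∈ T, ∃ a : Fin m, g ^ σ = u * of a * v⁻¹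

inductive Reach (T : Finset (FreeGroup (Fin m))) : FreeGroup (Fin m) → Prop
  | one : 1 ∈ T → Reach T 1
  | step (s : FreeGroup (Fin m)) (a : Fin m × Bool) : Reach T s → s * FreeGroup.mk [a] ∈ T →
      Reach T (s * FreeGroup.mk [a])

theorem toWord_pre {t : FreeGroup (Fin m)} {L : List (Fin m × Bool)} (h : L <+: t.toWord) :
    (FreeGroup.mk L).toWord = L := by
  rw [toWord_mk]
  obtain ⟨r, hr⟩ := h
  have h2 : FreeGroup.IsReduced (L ++ r) := by rw [hr]; exact isReduced_toWord
  have h3 : FreeGroup.IsReduced L := List.IsChain.left_of_append h2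
  exact h3.reduce_eq

theorem pre_mul {s : FreeGroup (Fin m)} {a : Fin m × Bool} {L : List (Fin m × Bool)}
    (h : L <+: (s * FreeGroup.mk [a]).toWord) :
    L <+: s.toWord ∨ L = (s * FreeGroup.mk [a]).toWord := by
  by_cases hr : IsReduced (s.toWord ++ [a])
  · have e : (s * FreeGroup.mk [a]).toWord = s.toWord ++ [a] := by
      conv_lhs => rw [← mk_toWord (x := s), mul_mk, toWord_mk]
      exact hr.reduce_eq
    rw [e] at h ⊢
    rcases List.prefix_concat_iff.1 h with h | h
    · right; simpa using h
    · left; exact h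
  · rcases List.eq_nil_or_concat s.toWord with hs | ⟨M, c, hs⟩
    · rw [hs] at hr
      exact absurd IsReduced.singleton hr
    · rw [List.concat_eq_append] at hs
      have hM : IsReduced M := by
        have h2 : FreeGroup.IsReduced (M ++ [c]) := by rw [← hs]; exact isReduced_toWord
        exact List.IsChain.left_of_append h2
      have hc : c.1 = a.1 ∧ c.2 = !a.2 := by
        by_contra hcon
        apply hr
        rw [hs]
        have h2 : IsReduced (M ++ [c]) := by rw [← hs]; exact isReduced_toWord
        have h3 : IsReduced ([c] ++ [a]) := by
          unfold FreeGroup.IsReduced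
          simp
          intro h; by_contra h4; exact hcon ⟨h, by cases hc : c.2 <;> cases ha : a.2 <;> simp_all⟩
        simpa using h2.append_overlap h3 (by simp)
      have e : (s * FreeGroup.mk [a]).toWord = M := by
        conv_lhs => rw [← mk_toWord (x := s), hs, mul_mk]
        have : (FreeGroup.mk (M ++ [c] ++ [a])) = FreeGroup.mk M := by
          apply Quot.sound
          have := @Red.Step.not _ M [] c.1 c.2
          obtain ⟨c1, c2⟩ := c
          obtain ⟨a1, a2⟩ := a
          simp at hc
          obtain ⟨rfl, rfl⟩ := hc
          simpa using this
        rw [this, toWord_mk]; exact hM.reduce_eq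
      left
      rw [e] at h
      rw [hs]
      exact h.trans (by simp)

theorem Reach.mem {T : Finset (FreeGroup (Fin m))} {t} (h : Reach T t) : t ∈ T := by
  cases h <;> assumption

theorem Reach.pc {T : Finset (FreeGroup (Fin m))} {t} (h : Reach T t) :
    ∀ L, L <+: t.toWord → FreeGroup.mk L ∈ T := by
  induction h with
  | one h => intro L hL; simp at hL; subst hL; exact h
  | step s a hs h ih =>
    intro L hL
    rcases pre_mul hL with h1 | h1
    · exact ih L h1
    · rw [h1, mk_toWord]; exact h

theorem split_word {t : FreeGroup (Fin m)} {L : List (Fin m × Bool)} {a : Fin m × Bool}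
    (h : t.toWord = L ++ [a]) : (FreeGroup.mk L).toWord = L ∧ t = FreeGroup.mk L * FreeGroup.mk [a] := by
  refine ⟨toWord_pre (t := t) (by simp [h]), ?_⟩
  rw [mul_mk, ← h, mk_toWord]

theorem rep_of_letter {T : Finset (FreeGroup (Fin m))} {g u v : FreeGroup (Fin m)} (hu : u ∈ T)
    (hv : v ∈ T) (a : Fin m × Bool) (σ : ℤ) (hσ : σ = 1 ∨ σ = -1)
    (h : g ^ σ = u * FreeGroup.mk [a] * v⁻¹) : Rep T g := by
  obtain ⟨a, b⟩ := a
  cases b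
  · refine ⟨-σ, by omega, v, hv, u, hu, a, ?_⟩
    rw [zpow_neg, h]
    have : FreeGroup.mk [(a, false)] = (of a)⁻¹ := by simp [of, inv_mk, invRev]
    rw [this]; group
  · exact ⟨σ, hσ, u, hu, v, hv, a, h⟩

theorem foldcore (T : Finset (FreeGroup (Fin m))) (h1 : 1 ∈ T) (hT : PC T)
    (φ : FreeGroup (Fin n) →* FreeGroup (Fin m)) (i : Fin n) (p v : FreeGroup (Fin m))
    (hp : p ∈ T) (hv : v ∈ T) (hpv : ¬ v.toWord <+: p.toWord) (σ : ℤ) (hσ : σ = 1 ∨ σ = -1)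
    (hi : φ (of i) ^ σ = p * v⁻¹) (hj : ∀ j, j ≠ i → Rep T (φ (of j))) :
    ∃ T' : Finset (FreeGroup (Fin m)), T'.card < T.card ∧ 1 ∈ T' ∧ PC T' ∧
      ∃ e : FreeGroup (Fin n) ≃* FreeGroup (Fin n), ∀ j, Rep T' (φ (e (of j))) := by
  classical
  set g := p * v⁻¹ with hg
  let H : FreeGroup (Fin m) → ℤ := fun u => if v.toWord <+: u.toWord then 1 else 0
  let f : FreeGroup (Fin m) → FreeGroup (Fin m) := fun u => g ^ (H u) * u
  have f0 : ∀ u, ¬ v.toWord <+: u.toWord → f u = u := fun u hu => by simp [f, H, hu]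
  have f1 : ∀ u, v.toWord <+: u.toWord → f u = g * u := fun u hu => by simp [f, H, hu]
  have fv : f v = p := by rw [f1 _ (List.prefix_refl _), hg]; group
  have fp : f p = p := f0 p hpv
  have hv1 : v.toWord ≠ [] := fun h => hpv (by rw [h]; simp)
  have f11 : f 1 = 1 := f0 1 (by simpa using hv1)
  have hfm : ∀ u ∈ T, f u ∈ T.image f := fun u hu => Finset.mem_image_of_mem f hu
  have hone : (1 : FreeGroup (Fin m)) ∈ T.image f := by simpa [f11] using hfm 1 h1
  have step0 : ∀ L t, t.toWord = L → t ∈ T → ¬ v.toWord <+: t.toWord → Reach (T.image f) t := by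
    intro L
    induction L using List.reverseRecOn with
    | nil => intro t ht _ _; rw [toWord_eq_nil_iff] at ht; subst ht; exact Reach.one hone
    | append_singleton L a ih =>
      intro t ht htT hvt
      obtain ⟨e1, e2⟩ := split_word ht
      have : Reach (T.image f) (FreeGroup.mk L) := by
        apply ih _ e1 (hT t htT L (by simp [ht]))
        intro h; rw [e1] at h; exact hvt (h.trans (by simp [ht]))
      rw [e2]
      apply Reach.step _ _ this
      rw [← e2, ← f0 t hvt]; exact hfm t htT
  have step1 : ∀ L t, t.toWord = L → t ∈ T → v.toWord <+: t.toWord → Reach (T.image f) (f t) := by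
    intro L
    induction L using List.reverseRecOn with
    | nil => intro t ht _ h; rw [ht] at h; exact absurd (by simpa using h) hv1
    | append_singleton L a ih =>
      intro t ht htT hvt
      obtain ⟨e1, e2⟩ := split_word ht
      by_cases hvt' : v.toWord <+: L
      · have := ih _ e1 (hT t htT L (by simp [ht])) (by rwa [e1])
        have e3 : f t = f (FreeGroup.mk L) * FreeGroup.mk [a] := by
          rw [f1 t hvt, f1 _ (by rwa [e1]), mul_assoc g, ← e2]
        rw [e3]
        apply Reach.step _ _ this
        rw [← e3]; exact hfm t htT
      · rw [ht] at hvt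
        rcases List.prefix_concat_iff.1 hvt with h | h
        · have : t = v := toWord_injective (by rw [ht, h])
          rw [this, fv]
          exact step0 _ p rfl hp hpv
        · exact absurd h hvt'
  refine ⟨T.image f, ?_, hone, ?_, ?_⟩
  · apply lt_of_le_of_ne Finset.card_image_le
    intro h
    have := Finset.card_image_iff.1 h hv hp (by rw [fv, fp])
    exact hpv (by rw [this])
  · intro t ht
    obtain ⟨s, hs, rfl⟩ := Finset.mem_image.1 ht
    by_cases h : v.toWord <+: s.toWord
    · exact (step1 _ s rfl hs h).pc
    · rw [f0 s h]; exact (step0 _ s rfl hs h).pc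
  · have hgz : ∀ k : ℤ, φ (of i) ^ (σ * k) = g ^ k := fun k => by rw [zpow_mul, hi]
    have key : ∀ j, j ≠ i → ∃ x y : ℤ, Rep (T.image f) (φ ((of i) ^ x * of j * (of i) ^ y)) := by
      intro j hji
      obtain ⟨τ, hτ, u, hu, w, hw, a, ha⟩ := hj j hji
      rcases hτ with rfl | rfl
      · refine ⟨σ * H u, σ * (- H w), 1, Or.inl rfl, f u, hfm u hu, f w, hfm w hw, a, ?_⟩
        rw [zpow_one] at ha ⊢
        simp only [_root_.map_mul, _root_.map_zpow, hgz, ha, f]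
        group
      · refine ⟨σ * H w, σ * (- H u), -1, Or.inr rfl, f u, hfm u hu, f w, hfm w hw, a, ?_⟩
        have ha' : φ (of j) = w * (of a)⁻¹ * u⁻¹ := by
          rw [← inv_inv (φ (of j)), ← zpow_neg_one (φ (of j)), ha]; group
        simp only [_root_.map_mul, _root_.map_zpow, hgz, ha', f]
        group
    choose! x y hxy using key
    refine ⟨niel i (fun j => if j = i then 0 else x j) (fun j => if j = i then 0 else y j)
      (by simp) (by simp), fun j => ?_⟩
    rw [niel_of]
    by_cases hji : j = i
    · subst hji
      simp only [if_true, zpow_zero, one_mul, mul_one]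
      rcases List.eq_nil_or_concat v.toWord with h | ⟨L, d, h⟩
      · exact absurd h hv1
      · rw [List.concat_eq_append] at h
        obtain ⟨e1, e2⟩ := split_word h
        have hL : FreeGroup.mk L ∈ T := hT v hv L (by simp [h])
        have hfL : f (FreeGroup.mk L) = FreeGroup.mk L := f0 _ (by
          rw [e1, h]; intro h; have := h.length_le; simp at this)
        refine rep_of_letter (u := FreeGroup.mk L) (v := p) ?_ ?_ d (-σ) (by omega) ?_
        · rw [← hfL]; exact hfm _ hL
        · rw [← fp]; exact hfm _ hp
        · rw [zpow_neg, hi, hg, ← e2]; group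
    · simp only [hji, if_false]
      exact hxy j hji
end nielsen
end W

namespace W
open FreeGroup

section nielsen2
variable {m n : ℕ}

theorem perm_ext {T : Type} [Fintype T] (R : T → T → Prop)
    (H1 : ∀ s t t', R s t → R s t' → t = t') (H2 : ∀ s s' t, R s t → R s' t → s = s') :
    ∃ P : Equiv.Perm T, ∀ s t, R s t → P s = t := by
  classical
  let f : T → T := fun s => if h : ∃ t, R s t then h.choose else s
  have hf : ∀ s, (∃ t, R s t) → R s (f s) := fun s h => by
    simp only [f, h, dif_pos]; exact h.choose_spec
  obtain ⟨g, hg⟩ := Set.MapsTo.exists_equiv_extend_of_card_eq (α := T) (β := T)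
    (t := Finset.univ) (by simp) (s := {s | ∃ t, R s t}) (f := f) (by intro x _; simp)
    (by
      intro x hx y hy hxy
      have h1 := hf x hx
      have h2 := hf y hy
      rw [← hxy] at h2
      exact H2 _ _ _ h1 h2)
  refine ⟨g.trans (Equiv.subtypeUnivEquiv (by simp)), fun s t hst => ?_⟩
  have := hg s ⟨t, hst⟩
  simp only [Equiv.trans_apply, Equiv.subtypeUnivEquiv_apply]
  rw [this]
  exact H1 s _ _ (hf s ⟨t, hst⟩) hst

theorem nofold (T : Finset (FreeGroup (Fin m))) (h1 : 1 ∈ T) (hT : PC T)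
    (φ : FreeGroup (Fin n) →* FreeGroup (Fin m)) (hφ : Function.Surjective φ)
    (R : Fin m → T → T → Prop)
    (H1 : ∀ a s t t', R a s t → R a s t' → t = t') (H2 : ∀ a s s' t, R a s t → R a s' t → s = s')
    (Ht : ∀ a (s t : T), t.1 = s.1 * of a → R a s t)
    (He : ∀ i, ∃ σ : ℤ, (σ = 1 ∨ σ = -1) ∧ ∃ (u v : T) (a : Fin m),
      R a u v ∧ φ (of i) ^ σ = u.1 * of a * v.1⁻¹) : ∀ t ∈ T, t = 1 := by
  have := fun a => perm_ext (R a) (H1 a) (H2 a)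
  choose P hP using this
  let ψ : FreeGroup (Fin m) →* Equiv.Perm T := FreeGroup.lift (fun a => (P a)⁻¹)
  have hψ : ∀ a, ψ (of a) = (P a)⁻¹ := fun a => by simp [ψ]
  let o : T := ⟨1, h1⟩
  have hR : ∀ a s t, R a s t → ψ (of a) t = s := by
    intro a s t h
    rw [hψ, Equiv.Perm.inv_eq_iff_eq, hP a s t h]
  have hpath : ∀ L t, t.toWord = L → ∀ ht : t ∈ T, ψ t ⟨t, ht⟩ = o := by
    intro L
    induction L using List.reverseRecOn with
    | nil => intro t h ht; rw [toWord_eq_nil_iff] at h; subst h; simp [o]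
    | append_singleton L a ih =>
      intro t h ht
      obtain ⟨e1, e2⟩ := split_word h
      have hL : FreeGroup.mk L ∈ T := hT t ht L (by simp [h])
      have e3 := ih _ e1 hL
      have e4 : ψ (FreeGroup.mk [a]) ⟨t, ht⟩ = ⟨FreeGroup.mk L, hL⟩ := by
        obtain ⟨a, b⟩ := a
        cases b
        · have e5 : FreeGroup.mk [(a, false)] = (of a)⁻¹ := by simp [of, inv_mk, invRev]
          rw [e5, _root_.map_inv, Equiv.Perm.inv_eq_iff_eq]
          symm
          apply hR
          apply Ht
          simp only
          rw [e2, e5]; group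
        · apply hR
          apply Ht
          exact e2
      calc ψ t ⟨t, ht⟩ = ψ (FreeGroup.mk L * FreeGroup.mk [a]) ⟨t, ht⟩ := by rw [← e2]
        _ = o := by rw [_root_.map_mul, Equiv.Perm.mul_apply, e4, e3]
  have hpath' : ∀ t : T, ψ t.1 t = o := fun t => hpath _ t.1 rfl t.2
  have hfix : ∀ i, ψ (φ (of i)) o = o := by
    intro i
    obtain ⟨σ, hσ, u, v, a, hr, he⟩ := He i
    have : ψ (φ (of i) ^ σ) o = o := by
      rw [he, _root_.map_mul, _root_.map_mul, _root_.map_inv, Equiv.Perm.mul_apply,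
        Equiv.Perm.mul_apply]
      have : (ψ v.1)⁻¹ o = v := by rw [Equiv.Perm.inv_eq_iff_eq, hpath']
      rw [this, hR a u v hr, hpath']
    rcases hσ with rfl | rfl
    · simpa using this
    · rw [zpow_neg_one, _root_.map_inv, Equiv.Perm.inv_eq_iff_eq] at this
      exact this.symm
  have hfix' : ∀ w, ψ (φ w) o = o := by
    intro w
    induction w using FreeGroup.induction_on with
    | C1 => simp
    | of i => exact hfix i
    | inv_of i h => rw [_root_.map_inv, _root_.map_inv, Equiv.Perm.inv_eq_iff_eq]; exact (hfix i).symm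
    | mul x y hx hy => rw [_root_.map_mul, _root_.map_mul, Equiv.Perm.mul_apply, hy, hx]
  intro t ht
  obtain ⟨w, hw⟩ := hφ t
  have h2 := hfix' w
  rw [hw] at h2
  have h3 := hpath' ⟨t, ht⟩
  have := (ψ t).injective (h3.trans h2.symm)
  simpa [o] using this

/-- some primitive element lies in the kernel -/
def KP (φ : FreeGroup (Fin n) →* FreeGroup (Fin m)) : Prop :=
  ∃ (e : FreeGroup (Fin n) ≃* FreeGroup (Fin n)) (i : Fin n), φ (e (of i)) = 1

theorem KP.of_comp {φ : FreeGroup (Fin n) →* FreeGroup (Fin m)}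
    {e : FreeGroup (Fin n) ≃* FreeGroup (Fin n)} (h : KP (φ.comp e.toMonoidHom)) : KP φ := by
  obtain ⟨f, i, h⟩ := h
  exact ⟨f.trans e, i, h⟩

theorem fold_loop (hmn : m < n) : ∀ (k : ℕ) (T : Finset (FreeGroup (Fin m))), T.card = k → 1 ∈ T →
    PC T → ∀ φ : FreeGroup (Fin n) →* FreeGroup (Fin m), Function.Surjective φ →
    (∀ i, Rep T (φ (of i))) → KP φ := by
  classical
  intro k
  induction k using Nat.strong_induction_on with
  | _ k ih =>
  intro T hk h1 hT φ hφ hrep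
  by_contra hK
  -- basic fold
  have fold1 : ∀ φ : FreeGroup (Fin n) →* FreeGroup (Fin m), Function.Surjective φ → ¬ KP φ →
      ∀ i, (∀ j, j ≠ i → Rep T (φ (of j))) → ∀ p ∈ T, ∀ v ∈ T, ∀ σ : ℤ, (σ = 1 ∨ σ = -1) →
      φ (of i) ^ σ = p * v⁻¹ → False := by
    intro φ hφ hK i hj p hp v hv σ hσ hi
    have main : ∀ p ∈ T, ∀ v ∈ T, ∀ σ : ℤ, (σ = 1 ∨ σ = -1) →
        φ (of i) ^ σ = p * v⁻¹ → ¬ v.toWord <+: p.toWord → False := by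
      intro p hp v hv σ hσ hi hpv
      obtain ⟨T', hc, h1', hT', e, he⟩ := foldcore T h1 hT φ i p v hp hv hpv σ hσ hi hj
      exact hK (KP.of_comp (e := e) (ih T'.card (hk ▸ hc) T' rfl h1' hT' (φ.comp e.toMonoidHom)
        (hφ.comp e.surjective) he))
    by_cases h2 : v.toWord <+: p.toWord
    · by_cases h3 : p.toWord <+: v.toWord
      · have : p = v := toWord_injective (h3.eq_of_length_le h2.length_le)
        rw [this, mul_inv_cancel] at hi
        apply hK
        refine ⟨MulEquiv.refl _, i, ?_⟩
        rcases hσ with rfl | rfl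
        · simpa using hi
        · simpa using hi
      · exact main v hv p hp (-σ) (by omega) (by rw [zpow_neg, hi]; group) h3
    · exact main p hp v hv σ hσ hi h2
  have fold2 : ∀ i j, i ≠ j → ∀ x y : ℤ, ∀ p ∈ T, ∀ v ∈ T, ∀ σ : ℤ, (σ = 1 ∨ σ = -1) →
      (φ (of i) ^ x * φ (of j) * φ (of i) ^ y) ^ σ = p * v⁻¹ → False := by
    intro i j hij x y p hp v hv σ hσ h
    let e := niel i (fun l => if l = j then x else 0) (fun l => if l = j then y else 0)
      (by simp [hij]) (by simp [hij])
    have hej : e (of j) = (of i) ^ x * of j * (of i) ^ y := by simp [e, niel_of]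
    have hel : ∀ l, l ≠ j → e (of l) = of l := fun l hl => by simp [e, niel_of, hl]
    refine fold1 (φ.comp e.toMonoidHom) (hφ.comp e.surjective) (fun h => hK (KP.of_comp h)) j ?_
      p hp v hv σ hσ ?_
    · intro l hl
      have : (φ.comp e.toMonoidHom) (of l) = φ (of l) := congrArg φ (hel l hl)
      rw [this]; exact hrep l
    · have : (φ.comp e.toMonoidHom) (of j) = φ (of i) ^ x * φ (of j) * φ (of i) ^ y :=
        (congrArg φ hej).trans (by simp)
      rw [this]; exact h
  choose σ hσ u hu v hv a ha using hrep
  have fold1' : ∀ i, ∀ p ∈ T, ∀ q ∈ T, u i * of (a i) * (v i)⁻¹ = p * q⁻¹ → False := by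
    intro i p hp q hq h
    exact fold1 φ hφ hK i (fun j _ => ⟨σ j, hσ j, u j, hu j, v j, hv j, a j, ha j⟩) p hp q hq
      (σ i) (hσ i) ((ha i).trans h)
  -- two edges with the same label and the same start
  have foldS : ∀ i j, a i = a j → u i = u j → i = j := by
    intro i j h1 h2
    by_contra hij
    have hi := ha i
    have hj := ha j
    rw [h1, h2] at hi
    rcases hσ j with h3 | h3
    · rw [h3, zpow_one] at hj
      refine fold2 i j hij (- σ i) 0 (v i) (hv i) (v j) (hv j) 1 (Or.inl rfl) ?_
      rw [zpow_neg, hi, hj]; group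
    · rw [h3, zpow_neg_one, inv_eq_iff_eq_inv] at hj
      refine fold2 i j hij 0 (σ i) (v j) (hv j) (v i) (hv i) 1 (Or.inl rfl) ?_
      rw [hi, hj]; group
  have foldE : ∀ i j, a i = a j → v i = v j → i = j := by
    intro i j h1 h2
    by_contra hij
    have hi := ha i
    have hj := ha j
    rw [h1, h2] at hi
    rcases hσ j with h3 | h3
    · rw [h3, zpow_one] at hj
      refine fold2 i j hij 0 (- σ i) (u j) (hu j) (u i) (hu i) 1 (Or.inl rfl) ?_
      rw [zpow_neg, hi, hj]; group
    · rw [h3, zpow_neg_one, inv_eq_iff_eq_inv] at hj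
      refine fold2 i j hij (σ i) 0 (u i) (hu i) (u j) (hu j) 1 (Or.inl rfl) ?_
      rw [hi, hj]; group
  have hall := nofold T h1 hT φ hφ
    (fun b s t => t.1 = s.1 * of b ∨ ∃ i, u i = s.1 ∧ v i = t.1 ∧ a i = b)
    (by
      rintro b s t t' (h | ⟨i, h2, h3, h4⟩) (h' | ⟨j, h2', h3', h4'⟩)
      · exact Subtype.ext (h.trans h'.symm)
      · exact (fold1' j t.1 t.2 t'.1 t'.2 (by rw [h2', h4', h3', h])).elim
      · exact (fold1' i t'.1 t'.2 t.1 t.2 (by rw [h2, h4, h3, h'])).elim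
      · have := foldS i j (h4.trans h4'.symm) (h2.trans h2'.symm)
        subst this
        exact Subtype.ext (h3.symm.trans h3'))
    (by
      rintro b s s' t (h | ⟨i, h2, h3, h4⟩) (h' | ⟨j, h2', h3', h4'⟩)
      · exact Subtype.ext (mul_right_cancel (h.symm.trans h'))
      · exact (fold1' j s'.1 s'.2 s.1 s.2 (by rw [h2', h4', h3', h]; group)).elim
      · exact (fold1' i s.1 s.2 s'.1 s'.2 (by rw [h2, h4, h3, h']; group)).elim
      · have := foldE i j (h4.trans h4'.symm) (h3.trans h3'.symm)
        subst this
        exact Subtype.ext (h2.symm.trans h2'))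
    (fun b s t h => Or.inl h)
    (fun i => ⟨σ i, hσ i, ⟨u i, hu i⟩, ⟨v i, hv i⟩, a i, Or.inr ⟨i, rfl, rfl, rfl⟩, ha i⟩)
  obtain ⟨i, j, hij, hab⟩ := Fintype.exists_ne_map_eq_of_card_lt a (by simpa using hmn)
  exact hij (foldS i j hab ((hall _ (hu i)).trans (hall _ (hu j)).symm))

theorem kernel_primitive (hmn : m < n) (φ : FreeGroup (Fin n) →* FreeGroup (Fin m))
    (hφ : Function.Surjective φ) : KP φ := by
  classical
  by_cases hex : ∃ i, φ (of i) = 1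
  · obtain ⟨i, hi⟩ := hex
    exact ⟨MulEquiv.refl _, i, hi⟩
  push Not at hex
  let N := Finset.univ.sup (fun i => (φ (of i)).norm)
  have hN : ∀ i, (φ (of i)).norm ≤ N := fun i =>
    Finset.le_sup (f := fun i => (φ (of i)).norm) (Finset.mem_univ i)
  let T : Finset (FreeGroup (Fin m)) :=
    ((List.finite_length_le (Fin m × Bool) N).image FreeGroup.mk).toFinset
  have hmem : ∀ g, g ∈ T ↔ g.norm ≤ N := by
    intro g
    simp only [T, Set.Finite.mem_toFinset, Set.mem_image, Set.mem_ofPred_eq]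
    constructor
    · rintro ⟨L, hL, rfl⟩; exact norm_mk_le.trans hL
    · intro h; exact ⟨g.toWord, h, mk_toWord⟩
  have h1 : 1 ∈ T := by rw [hmem]; simp
  refine fold_loop hmn _ T rfl h1 ?_ φ hφ ?_
  · intro t ht L hL
    rw [hmem] at ht ⊢
    exact norm_mk_le.trans (hL.length_le.trans ht)
  · intro i
    rcases List.eq_nil_or_concat (φ (of i)).toWord with h | ⟨L, d, h⟩
    · rw [toWord_eq_nil_iff] at h; exact absurd h (hex i)
    · rw [List.concat_eq_append] at h
      obtain ⟨e1, e2⟩ := split_word h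
      refine rep_of_letter (u := FreeGroup.mk L) (v := 1) ?_ h1 d 1 (Or.inl rfl) ?_
      · rw [hmem]
        refine norm_mk_le.trans ((?_ : L.length ≤ _).trans (hN i))
        simp [FreeGroup.norm, h]
      · rw [zpow_one, ← e2]; simp
end nielsen2

/-- basis obtained from a surjective map: conjugation and inversion of one letter -/
theorem final_basis {n : ℕ} (e : FreeGroup (Fin n) ≃* FreeGroup (Fin n)) (i : Fin n)
    (μ : FreeGroup (Fin n)) (h : IsConj μ (e (of i)) ∨ IsConj μ (e (of i))⁻¹) :
    ∃ b : Fin n → FreeGroup (Fin n), Function.Bijective (FreeGroup.lift b) ∧ μ ∈ Set.range b := by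
  have conj : ∀ (f : FreeGroup (Fin n) ≃* FreeGroup (Fin n)), IsConj μ (f (of i)) →
      ∃ b : Fin n → FreeGroup (Fin n), Function.Bijective (FreeGroup.lift b) ∧
        μ ∈ Set.range b := by
    intro f hf
    obtain ⟨c, hc⟩ := isConj_iff.1 hf.symm
    refine ⟨fun j => (f.trans (MulAut.conj c)) (of j), ?_, i, ?_⟩
    · have : FreeGroup.lift (fun j => (f.trans (MulAut.conj c)) (of j)) =
          (f.trans (MulAut.conj c)).toMonoidHom := by ext j; simp
      rw [this]
      exact (f.trans (MulAut.conj c)).bijective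
    · simpa using hc
  rcases h with h | h
  · exact conj e h
  · let ι : FreeGroup (Fin n) →* FreeGroup (Fin n) :=
      FreeGroup.lift (fun j => if j = i then (of j)⁻¹ else of j)
    have hι : ι.comp ι = MonoidHom.id _ := by
      ext j
      by_cases hj : j = i
      · simp [ι, hj]
      · simp [ι, hj]
    refine conj ((MonoidHom.toMulEquiv ι ι hι hι).trans e) ?_
    have : ι (of i) = (of i)⁻¹ := by simp [ι]
    simpa [this] using h

theorem main {n : ℕ} (hn : 1 ≤ n) (μ : FreeGroup (Fin n))
    (E : (FreeGroup (Fin n) ⧸ Subgroup.normalClosure {μ}) ≃* FreeGroup (Fin (n - 1))) :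
    ∃ b : Fin n → FreeGroup (Fin n), Function.Bijective (FreeGroup.lift b) ∧
      μ ∈ Set.range b := by
  obtain ⟨e, i, h⟩ := kernel_primitive (by omega : n - 1 < n)
    (E.toMonoidHom.comp (QuotientGroup.mk' (Subgroup.normalClosure {μ})))
    (E.surjective.comp (QuotientGroup.mk'_surjective _))
  have h1 : e (of i) ∈ Subgroup.normalClosure {μ} := by
    simpa using h
  have h2 : of i ∈ Subgroup.normalClosure {e.symm μ} := by
    have h3 := Subgroup.mem_map_of_mem e.symm.toMonoidHom h1
    rw [Subgroup.map_normalClosure _ _ e.symm.surjective] at h3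
    simpa using h3
  apply final_basis e i μ
  rcases conj_letter' (e.symm μ) i h2 with h3 | h3
  · left; simpa using e.toMonoidHom.map_isConj h3
  · right; simpa using e.toMonoidHom.map_isConj h3
end W

/-- (Whitehead) If F is free of rank n and the quotient of F by the normal closure
of μ is free of rank n − 1, then μ is a primitive element of F. -/
theorem stmt_14 (n : ℕ) (hn : 1 ≤ n) (μ : FreeGroup (Fin n))
    (h : Nonempty
      ((FreeGroup (Fin n) ⧸ Subgroup.normalClosure {μ}) ≃* FreeGroup (Fin (n - 1)))) :
    ∃ b : Fin n → FreeGroup (Fin n),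
      Function.Bijective (FreeGroup.lift b) ∧ μ ∈ Set.range b := by
  obtain ⟨E⟩ := h
  exact W.main hn μ E
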